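/- arXiv:2409.08785 — 2 statements merged into one kernel-verified Lean document; each statement's English description precedes it below -/
import Mathlib

section
/- Let $B$ be a ring with a non-zero divisor $t$, and let $M$ be a $B/t^m$-module for some $m \geq 1$. Suppose $M/tM$ is a finite projective $B/t$-module of rank $r$, and for each $0 \leq n \leq m-1$ the multiplication-by-$t^n$ map induces an isomorphism of $B/t$-modules $M/tM \to t^nM/t^{n+1}M$. Then $M$ is a finite projective $B/t^m$-module of rank $r$. -/
/-!
Put `R = B / t ^ m` and `S = B / t`. The idea is to lift the finite projective `S`-module `M / tM`
to a finite projective `R`-module `P` and to show that `P` is isomorphic to `M`.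

Write `M / tM` as the image of an idempotent matrix over `S`. Since `t` is nilpotent in `R`, that
matrix lifts to an idempotent matrix over `R`, whose image is `P`; lifting generators gives a map
`g : P → M` which is an isomorphism modulo `t` (`exists_projective_lift`). It is surjective by
Nakayama for the nilpotent ideal `(t)`. If `g y = 0` and `y = t ^ n z`, then `t ^ n g(z) = 0`, so
`g(z) ∈ tM` by injectivity of `t ^ n : M / tM → t ^ n M / t ^ (n + 1) M`, hence `z ∈ tP` and
`y ∈ t ^ (n + 1) P`; as `t ^ m = 0`, this forces `y = 0` (`finite_projective_of_reduction`).

For the rank, `M / tM` is the base change of `M` to `S`, and `Spec S → Spec R` is surjective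
(`finrank_localized_of_reduction`).
-/


/-- A module is finite projective of (constant) rank `r`. -/
def IsFiniteProjectiveOfRank (R : Type*) [CommRing R] (M : Type*) [AddCommGroup M]
    [Module R M] (r : ℕ) : Prop :=
  Module.Finite R M ∧ Module.Projective R M ∧
    ∀ (P : Ideal R) [P.IsPrime],
      Module.finrank (Localization.AtPrime P) (LocalizedModule P.primeCompl M) = r

open scoped TensorProduct

/-- Matrices that vanish under reduction modulo `t` are nilpotent: a matrix all of whose
entries are divisible by `t` is `t • C`, and `(t • C) ^ m = t ^ m • C ^ m`. -/
theorem isNilpotent_of_map_eq_zero {R S : Type*} [CommRing R] [CommRing S] (φ : R →+* S)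
    (t : R) {m k : ℕ} (htm : t ^ m = 0) (hker : ∀ a, φ a = 0 → ∃ b, a = t * b)
    (A : Matrix (Fin k) (Fin k) R) (hA : φ.mapMatrix A = 0) : IsNilpotent A := by
  have h : ∀ i j, ∃ b, A i j = t * b := fun i j ↦ hker _ (congrFun (congrFun hA i) j)
  choose C hC using h
  refine ⟨m, ?_⟩
  have : A = t • Matrix.of C := by ext i j; simp [hC]
  rw [this, smul_pow, htm, zero_smul]

/-- A finite projective `S`-module `N` onto which an `R`-module `M` surjects lifts to a finite
projective `R`-module `P` with a map `P → M`: the composite `P → M → N` is surjective,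
with kernel contained in `t • P`. The module `P` is the image of an idempotent matrix over `R` that lifts an
idempotent matrix over `S` with image `N`. -/
theorem exists_projective_lift {R S M N : Type*} [CommRing R] [CommRing S] [AddCommGroup M]
    [AddCommGroup N] [Module R M] [Module S N] [Module.Finite S N] [Module.Projective S N]
    (φ : R →+* S) (hφ : Function.Surjective φ) (t : R) {m : ℕ} (htm : t ^ m = 0)
    (hker : ∀ a, φ a = 0 → ∃ b, a = t * b)
    (q : M →ₛₗ[φ] N) (hqs : Function.Surjective q) :
    ∃ (k : ℕ) (P : Submodule R (Fin k → R)) (g : P →ₗ[R] M),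
      Module.Finite R P ∧ Module.Projective R P ∧
      (∀ x : M, ∃ y : P, q (g y) = q x) ∧
      (∀ y : P, q (g y) = 0 → ∃ z : P, y = t • z) := by
  obtain ⟨k, p, hp⟩ := Module.Finite.exists_fin' S N
  obtain ⟨s, hs⟩ := Module.projective_lifting_property p LinearMap.id hp
  have hs' : ∀ x, p (s x) = x := fun x ↦ LinearMap.congr_fun hs x
  obtain ⟨A, hA, hAE⟩ := exists_isIdempotentElem_eq_of_ker_isNilpotent
    (φ.mapMatrix (m := Fin k)) (isNilpotent_of_map_eq_zero φ t htm hker)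
    (LinearMap.toMatrix' (s ∘ₗ p))
    (by
      choose σ hσ using hφ
      exact ⟨(LinearMap.toMatrix' (s ∘ₗ p)).map σ, by ext i j; simp [hσ]⟩)
    (by
      rw [IsIdempotentElem, ← LinearMap.toMatrix'_mul]
      congr 1
      ext1 i
      ext1
      simp [hs'])
  have hAA : ∀ v, A.mulVec (A.mulVec v) = A.mulVec v := fun v ↦ by
    rw [Matrix.mulVec_mulVec, hA.eq]
  have hred : ∀ v : Fin k → R, φ ∘ (A.mulVec v) = s (p (φ ∘ v)) := fun v ↦ by
    have h1 : φ ∘ (A.mulVec v) = (φ.mapMatrix A).mulVec (φ ∘ v) := by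
      ext i; exact RingHom.map_mulVec φ A v i
    rw [h1, hAE, LinearMap.toMatrix'_mulVec]; rfl
  choose w hw using fun i : Fin k ↦ hqs (p (Pi.single i 1))
  let π : (Fin k → R) →ₗ[R] M := Fintype.linearCombination R w
  have hπ : ∀ v, q (π v) = p (φ ∘ v) := fun v ↦ by
    rw [show φ ∘ v = ∑ i, φ (v i) • Pi.single i (1 : S) by
      ext j; simp [Finset.sum_apply, Pi.single_apply]]
    simp [π, Fintype.linearCombination_apply, hw, LinearMap.map_smulₛₗ]
  let e : (Fin k → R) →ₗ[R] (Fin k → R) := A.mulVecLin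
  have heP : ∀ y : LinearMap.range e, e y = y := by
    rintro ⟨_, v, rfl⟩; exact hAA v
  refine ⟨k, LinearMap.range e, π ∘ₗ (LinearMap.range e).subtype, inferInstance,
    Module.Projective.of_split (LinearMap.range e).subtype e.rangeRestrict ?_, ?_, ?_⟩
  · ext1 y; exact Subtype.ext (heP y)
  · intro x
    obtain ⟨u, hu⟩ := hp (q x)
    choose σ hσ using hφ
    refine ⟨⟨e (σ ∘ u), _, rfl⟩, ?_⟩
    have hu' : φ ∘ σ ∘ u = u := by ext i; simp [hσ]
    change q (π (A.mulVec (σ ∘ u))) = q x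
    rw [hπ, hred, hs', hu', hu]
  · intro y hy
    -- The reduction of `y` is fixed by `s ∘ p`, so it vanishes as soon as its image in `N` does.
    have h0 : φ ∘ (y : Fin k → R) = 0 := by
      have h1 : p (φ ∘ (y : Fin k → R)) = 0 := by rw [← hπ]; exact hy
      have h2 := hred y
      rw [h1, map_zero] at h2
      rw [← h2]; exact congrArg (φ ∘ ·) (heP y).symm
    choose z hz using fun i ↦ hker _ (congrFun h0 i)
    refine ⟨⟨e z, _, rfl⟩, Subtype.ext ?_⟩
    rw [← heP y, show (y : Fin k → R) = t • z from funext hz, map_smul]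
    rfl

/-- A module over `R` whose reduction `N` modulo the nilpotent element `t` is finite projective is
itself finite projective, provided `t ^ n : M / tM → t ^ n M / t ^ (n + 1) M` is injective for
`n < m`. -/
theorem finite_projective_of_reduction {R S M N : Type*} [CommRing R] [CommRing S]
    [AddCommGroup M] [AddCommGroup N] [Module R M] [Module S N] [Module.Finite S N]
    [Module.Projective S N]
    (φ : R →+* S) (hφ : Function.Surjective φ) (t : R) {m : ℕ} (htm : t ^ m = 0)
    (hker : ∀ a, φ a = 0 → ∃ b, a = t * b)
    (q : M →ₛₗ[φ] N) (hqs : Function.Surjective q) (hq : ∀ x, q x = 0 ↔ ∃ y, x = t • y)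
    (hinj : ∀ n < m, ∀ x y : M, t ^ n • x = t ^ (n + 1) • y → ∃ z, x = t • z) :
    Module.Finite R M ∧ Module.Projective R M := by
  obtain ⟨k, P, g, hfin, hproj, hgs, hgi⟩ := exists_projective_lift φ hφ t htm hker q hqs
  have hsurj : Function.Surjective g := by
    -- Nakayama for a nilpotent ideal: approximate `x` modulo higher and higher powers of `t`.
    have key : ∀ n, ∀ x : M, ∃ (y : P) (x' : M), x = g y + t ^ n • x' := by
      intro n
      induction n with
      | zero => exact fun x ↦ ⟨0, x, by simp⟩
      | succ n ih =>
        intro x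
        obtain ⟨y, x', rfl⟩ := ih x
        obtain ⟨y', hy'⟩ := hgs x'
        obtain ⟨x'', hx''⟩ := (hq (x' - g y')).1 (by rw [map_sub, hy', sub_self])
        refine ⟨y + t ^ n • y', x'', ?_⟩
        rw [map_add, map_smul, pow_succ, mul_smul, ← hx'', smul_sub]
        abel
    intro x
    obtain ⟨y, x', h⟩ := key m x
    exact ⟨y, by rw [h, htm, zero_smul, add_zero]⟩
  have hginj : Function.Injective g := by
    rw [injective_iff_map_eq_zero]
    intro y hy
    -- An element of the kernel is divisible by every power of `t`.
    have key : ∀ n ≤ m, ∃ z : P, y = t ^ n • z := by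
      intro n
      induction n with
      | zero => exact fun _ ↦ ⟨y, by simp⟩
      | succ n ih =>
        intro hn
        obtain ⟨z, hz⟩ := ih (by omega)
        have h0 : t ^ n • g z = t ^ (n + 1) • (0 : M) := by
          rw [← map_smul, ← hz, hy, smul_zero]
        obtain ⟨z', hz'⟩ := hgi z ((hq _).2 (hinj n hn _ _ h0))
        exact ⟨z', by rw [hz, hz', pow_succ, mul_smul]⟩
    obtain ⟨z, hz⟩ := key m le_rfl
    rw [hz, htm, zero_smul]
  let f : P ≃ₗ[R] M := LinearEquiv.ofBijective g ⟨hginj, hsurj⟩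
  exact ⟨Module.Finite.equiv f, Module.Projective.of_equiv f⟩

/-- The rank is unchanged by reduction modulo `t`: `N` is the base change of `M` to `S`, and every
prime of `R` contains the nilpotent element `t`, hence comes from `S`. -/
theorem finrank_localized_of_reduction {R S M N : Type*} [CommRing R] [CommRing S]
    [AddCommGroup M] [AddCommGroup N] [Module R M] [Module S N] [Module.Finite R M]
    [Module.Projective R M]
    (φ : R →+* S) (hφ : Function.Surjective φ) (t : R) {m : ℕ} (htm : t ^ m = 0)
    (hker : ∀ a, φ a = 0 ↔ ∃ b, a = t * b)
    (q : M →ₛₗ[φ] N) (hqs : Function.Surjective q) (hq : ∀ x, q x = 0 → ∃ y, x = t • y)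
    {r : ℕ} (hr : ∀ (Q : Ideal S) [Q.IsPrime],
      Module.finrank (Localization.AtPrime Q) (LocalizedModule Q.primeCompl N) = r)
    (P : Ideal R) [hP : P.IsPrime] :
    Module.finrank (Localization.AtPrime P) (LocalizedModule P.primeCompl M) = r := by
  let _ : Algebra R S := φ.toAlgebra
  let _ : Module R N := Module.compHom N φ
  have : IsScalarTower R S N := ⟨fun a b x ↦ mul_smul (φ a) b x⟩
  let q' : M →ₗ[R] N :=
    { toFun := q
      map_add' := map_add q
      map_smul' := fun a x ↦ q.map_smulₛₗ a x }
  let β : TensorProduct R S M →ₗ[S] N :=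
    TensorProduct.AlgebraTensorModule.lift ((LinearMap.toSpanSingleton S (M →ₗ[R] N) q'))
  have hβ : ∀ x, β (1 ⊗ₜ x) = q x := fun x ↦ by
    simp [β, q']
  have hone : ∀ u : TensorProduct R S M, ∃ x, u = 1 ⊗ₜ x := by
    intro u
    induction u with
    | zero => exact ⟨0, by simp⟩
    | tmul a x =>
      obtain ⟨a, rfl⟩ := hφ a
      refine ⟨a • x, ?_⟩
      rw [← TensorProduct.smul_tmul, Algebra.smul_def, mul_one]; rfl
    | add u v hu hv =>
      obtain ⟨x, rfl⟩ := hu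
      obtain ⟨y, rfl⟩ := hv
      exact ⟨x + y, (TensorProduct.tmul_add _ _ _).symm⟩
  have hφt : φ t = 0 := (hker t).2 ⟨1, by simp⟩
  have hbij : Function.Bijective β := by
    refine ⟨(injective_iff_map_eq_zero β).2 fun u hu ↦ ?_, fun y ↦ ?_⟩
    · obtain ⟨x, rfl⟩ := hone u
      obtain ⟨y, rfl⟩ := hq x (by rw [← hβ, hu])
      rw [← TensorProduct.smul_tmul, Algebra.smul_def, mul_one,
        show algebraMap R S t = 0 from hφt, TensorProduct.zero_tmul]
    · obtain ⟨x, rfl⟩ := hqs y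
      exact ⟨1 ⊗ₜ x, hβ x⟩
  obtain ⟨Q, hQ⟩ : (⟨P, hP⟩ : PrimeSpectrum R) ∈ Set.range (PrimeSpectrum.comap φ) := by
    rw [range_comap_of_surjective S φ hφ, PrimeSpectrum.mem_zeroLocus]
    intro a ha
    obtain ⟨b, rfl⟩ := (hker a).1 ha
    exact P.mul_mem_right _ (hP.mem_of_pow_mem m (by rw [htm]; exact P.zero_mem))
  have h1 : Module.rankAtStalk (R := S) (TensorProduct R S M) Q =
      Module.rankAtStalk M (PrimeSpectrum.comap (algebraMap R S) Q) :=
    Module.rankAtStalk_baseChange ..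
  rw [Module.rankAtStalk_eq_of_equiv (LinearEquiv.ofBijective β hbij)] at h1
  have h2 : Module.rankAtStalk M (⟨P, hP⟩ : PrimeSpectrum R) = r := by
    rw [← hQ]
    exact h1.symm.trans (hr Q.asIdeal)
  exact h2

/-- Let `B` be a commutative ring with a non-zero divisor `t`, and let `M`
be a `B/t^m`-module (a `B`-module killed by `t^m`) for some `m ≥ 1`. Suppose `M/tM` is a
finite projective `B/t`-module of rank `r`, and for each `0 ≤ n ≤ m-1` multiplication by
`t^n` induces an isomorphism of `B/t`-modules `M/tM → t^n M/t^{n+1} M` (injectivity and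
surjectivity stated explicitly; note the map is well defined as it kills `tM`).
Then `M` is a finite projective `B/t^m`-module of rank `r`. -/
theorem stmt0 (B : Type*) [CommRing B] (t : B) (ht : t ∈ nonZeroDivisors B)
    (m r : ℕ) (hm : 1 ≤ m)
    (M : Type*) [AddCommGroup M] [Module B M]
    (htors : Module.IsTorsionBySet B M (Ideal.span {t ^ m} : Ideal B))
    (hfp : IsFiniteProjectiveOfRank (B ⧸ Ideal.span {t})
      (M ⧸ (Ideal.span {t} • (⊤ : Submodule B M))) r)
    (hinj : ∀ n, n ≤ m - 1 → ∀ x : M,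
      t ^ n • x ∈ (Ideal.span {t ^ (n + 1)} • (⊤ : Submodule B M)) →
        x ∈ (Ideal.span {t} • (⊤ : Submodule B M)))
    (hsurj : ∀ n, n ≤ m - 1 → ∀ y ∈ (Ideal.span {t ^ n} • (⊤ : Submodule B M)),
      ∃ x : M, y - t ^ n • x ∈ (Ideal.span {t ^ (n + 1)} • (⊤ : Submodule B M))) :
    letI : Module (B ⧸ Ideal.span {t ^ m}) M := htors.module
    IsFiniteProjectiveOfRank (B ⧸ Ideal.span {t ^ m}) M r := by
  let : Module (B ⧸ Ideal.span {t ^ m}) M := htors.module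
  have hdvd : Ideal.span {t ^ m} ≤ Ideal.span {t} :=
    Ideal.span_singleton_le_span_singleton.2 (dvd_pow_self t (by omega))
  let φ : B ⧸ Ideal.span {t ^ m} →+* B ⧸ Ideal.span {t} := Ideal.Quotient.factor hdvd
  have hφ : Function.Surjective φ := Ideal.Quotient.factor_surjective hdvd
  let τ : B ⧸ Ideal.span {t ^ m} := Ideal.Quotient.mk _ t
  have hsmul : ∀ (b : B) (x : M), (Ideal.Quotient.mk (Ideal.span {t ^ m}) b) • x = b • x :=
    fun _ _ ↦ rfl
  have hτn : ∀ (n : ℕ) (x : M), τ ^ n • x = t ^ n • x := fun n x ↦ by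
    rw [← hsmul, map_pow]
  have hmem : ∀ (a : B) (x : M),
      x ∈ Ideal.span {a} • (⊤ : Submodule B M) ↔ ∃ y, x = a • y := fun a x ↦ by
    simp [Submodule.ideal_span_singleton_smul, Submodule.mem_smul_pointwise_iff_exists, eq_comm]
  have hτm : τ ^ m = 0 := by
    rw [← map_pow]
    exact Ideal.Quotient.eq_zero_iff_mem.2 (Ideal.mem_span_singleton_self _)
  have hker : ∀ a, φ a = 0 ↔ ∃ b, a = τ * b := by
    intro a
    obtain ⟨a, rfl⟩ := Ideal.Quotient.mk_surjective a
    constructor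
    · intro h
      obtain ⟨b, rfl⟩ := Ideal.mem_span_singleton.1 (Ideal.Quotient.eq_zero_iff_mem.1 h)
      exact ⟨Ideal.Quotient.mk _ b, map_mul _ _ _⟩
    · rintro ⟨b, hb⟩
      rw [hb, map_mul, show φ τ = 0 from
        Ideal.Quotient.eq_zero_iff_mem.2 (Ideal.mem_span_singleton_self _), zero_mul]
  let q : M →ₛₗ[φ] (M ⧸ (Ideal.span {t} • (⊤ : Submodule B M))) :=
    { toFun := Submodule.Quotient.mk
      map_add' := fun _ _ ↦ rfl
      map_smul' := fun a x ↦ by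
        obtain ⟨a, rfl⟩ := Ideal.Quotient.mk_surjective a
        rfl }
  have hqs : Function.Surjective q := Submodule.Quotient.mk_surjective _
  have hq : ∀ x, q x = 0 ↔ ∃ y, x = τ • y := fun x ↦
    (Submodule.Quotient.mk_eq_zero _).trans (hmem t x)
  obtain ⟨hfin, hproj, hr⟩ := hfp
  obtain ⟨hfM, hpM⟩ := finite_projective_of_reduction φ hφ τ hτm (fun a ↦ (hker a).1) q hqs hq
    fun n hn x y hxy ↦ (hmem t x).1 <| hinj n (by omega) x <|
      (hmem _ _).2 ⟨y, by rwa [hτn, hτn] at hxy⟩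
  refine ⟨hfM, hpM, fun P _ ↦ ?_⟩
  exact finrank_localized_of_reduction φ hφ τ hτm hker q hqs (fun x ↦ (hq x).1) hr P
end

section
/- Let $B$ be a commutative ring, $t$ a non-zero divisor contained in the Jacobson radical of $B$ such that $B$ is $t$-adically complete, and let $\mathcal{C}_n$ denote the category of finite projective $B/t^n$-modules. Then the functor $M \mapsto (M/t^n M)_{n \geq 1}$ from finite projective $B$-modules to the inverse limit category $\varprojlim_n \mathcal{C}_n$ is an equivalence of categories. -/
/-!
Full faithfulness holds because a finite projective module `N`, being a retract of some `Bᵏ`, is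
`t`-adically complete (`isAdicComplete_of_finite_projective`): a compatible system of maps
`M → N/tⁿN` is then the same as a map `M → N` (`existsUnique_lift`).

For essential surjectivity, a surjection `Bᵏ → M₀` lifts successively to compatible maps
`pₙ : Bᵏ → Mₙ`, which are surjective by Nakayama since `t` lies in the Jacobson radical. Writing
`p̄ₙ : (B/tⁿ⁺¹)ᵏ → Mₙ` for the induced maps, compatible sections `sₙ` of `p̄ₙ` are built
recursively: projectivity of `Mₙ₊₁` over `B/tⁿ⁺²` lets one lift `(id, sₙ ∘ πₙ)` along the map
`(B/tⁿ⁺²)ᵏ → Mₙ₊₁ ×_{Mₙ} (B/tⁿ⁺¹)ᵏ`, which is surjective (`exists_section_step`). The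
compatible idempotents `sₙ ∘ p̄ₙ` come from a unique endomorphism `F` of `Bᵏ` by full
faithfulness, and uniqueness makes `F` idempotent. Its range `N` is the required module.
-/

/-- The reduction map `M/t^{n+2}M → M/t^{n+1}M`. -/
def resQ (B : Type*) [CommRing B] (t : B) (M : Type*) [AddCommGroup M] [Module B M]
    (n : ℕ) :
    (M ⧸ (Ideal.span {t ^ (n + 2)} • (⊤ : Submodule B M))) →ₗ[B]
      (M ⧸ (Ideal.span {t ^ (n + 1)} • (⊤ : Submodule B M))) :=
  Submodule.mapQ _ _ LinearMap.id (by
    rw [Submodule.comap_id]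
    exact Submodule.smul_mono_left
      (Ideal.span_singleton_le_span_singleton.mpr (pow_dvd_pow t (by omega))))

/-- Dependent choice along `ℕ` for a family of types. -/
lemma exists_dependent_seq {X : ℕ → Type*} (R : ∀ n, X n → X (n + 1) → Prop) (x₀ : X 0)
    (h : ∀ n x, ∃ y, R n x y) :
    ∃ x : ∀ n, X n, x 0 = x₀ ∧ ∀ n, R n (x n) (x (n + 1)) := by
  choose g hg using h
  exact ⟨fun n => Nat.rec x₀ (fun n x => g n x) n, rfl, fun n => hg n _⟩

lemma mem_span_singleton_smul_top {B M : Type*} [CommRing B] [AddCommGroup M] [Module B M]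
    (a : B) (x : M) :
    x ∈ Ideal.span {a} • (⊤ : Submodule B M) ↔ ∃ y, a • y = x := by
  rw [Submodule.ideal_span_singleton_smul, Submodule.mem_smul_pointwise_iff_exists]
  simp

lemma mem_smul_top_pi {B ι : Type*} [CommRing B] [Fintype ι] (I : Ideal B) (x : ι → B) :
    x ∈ I • (⊤ : Submodule B (ι → B)) ↔ ∀ i, x i ∈ I := by
  classical
  constructor
  · intro hx i
    refine Submodule.smul_induction_on hx (fun r hr y _ => ?_) (fun y z hy hz => I.add_mem hy hz)
    exact I.mul_mem_right _ hr
  · intro hx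
    rw [pi_eq_sum_univ' x]
    exact Submodule.sum_mem _ fun i _ => Submodule.smul_mem_smul (hx i) trivial

lemma map_mem_smul_top {B M N : Type*} [CommRing B] [AddCommGroup M] [Module B M]
    [AddCommGroup N] [Module B N] (I : Ideal B) (f : M →ₗ[B] N) {x : M}
    (hx : x ∈ I • (⊤ : Submodule B M)) : f x ∈ I • (⊤ : Submodule B N) := by
  have h := Submodule.mem_map_of_mem (f := f) hx
  rw [Submodule.map_smul''] at h
  exact Submodule.smul_mono le_rfl le_top h

/-- A finite projective module over an adically complete ring is adically complete, because it is
a retract of a finite free module, where completeness is checked on coordinates. -/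
lemma isAdicComplete_of_finite_projective {B N : Type*} [CommRing B] (I : Ideal B)
    [IsAdicComplete I B] [AddCommGroup N] [Module B N] [Module.Finite B N]
    [Module.Projective B N] : IsAdicComplete I N := by
  obtain ⟨k, p, hp⟩ := Module.Finite.exists_fin' B N
  obtain ⟨i, hi⟩ := Module.projective_lifting_property p LinearMap.id hp
  have hpi : ∀ x, p (i x) = x := fun x => LinearMap.congr_fun hi x
  refine { haus' := fun x hx => ?_, prec' := fun f hf => ?_ }
  · have : i x = 0 := by
      funext j
      refine IsHausdorff.haus (I := I) inferInstance _ fun n => ?_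
      have h := hx n
      rw [SModEq.zero] at h ⊢
      simpa using (mem_smul_top_pi _ _).1 (map_mem_smul_top _ i h) j
    rw [← hpi x, this, map_zero]
  · have key : ∀ j, ∃ L : B, ∀ n, i (f n) j ≡ L [SMOD (I ^ n • ⊤ : Submodule B B)] := by
      intro j
      refine IsPrecomplete.prec (I := I) inferInstance fun {m n} hmn => ?_
      have h := hf hmn
      rw [SModEq.sub_mem] at h ⊢
      simpa using (mem_smul_top_pi _ _).1 (map_mem_smul_top _ i h) j
    choose L hL using key
    refine ⟨p L, fun n => ?_⟩
    rw [SModEq.sub_mem, ← hpi (f n), ← map_sub]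
    refine map_mem_smul_top _ p ((mem_smul_top_pi _ _).2 fun j => ?_)
    have h := hL j n
    rw [SModEq.sub_mem] at h
    simpa using h

/-- Maps into a `t`-adically complete module are the same as compatible systems of maps modulo
the powers of `t`. -/
lemma existsUnique_lift {B M N : Type*} [CommRing B] (t : B) [AddCommGroup M] [Module B M]
    [AddCommGroup N] [Module B N] [IsAdicComplete (Ideal.span {t}) N]
    (f : (n : ℕ) → M →ₗ[B] (N ⧸ (Ideal.span {t ^ (n + 1)} • (⊤ : Submodule B N))))
    (hf : ∀ n, (resQ B t N n).comp (f (n + 1)) = f n) :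
    ∃! F : M →ₗ[B] N, ∀ n,
      (Submodule.mkQ (Ideal.span {t ^ (n + 1)} • (⊤ : Submodule B N))).comp F = f n := by
  have hI : ∀ n, (Ideal.span {t ^ (n + 1)} • ⊤ : Submodule B N) =
      Ideal.span {t} ^ (n + 1) • ⊤ := fun n => by rw [Ideal.span_singleton_pow]
  have ha : StrictMono (fun n : ℕ => n + 1) := fun a b h => by simpa using h
  let g : (n : ℕ) → M →ₗ[B] (N ⧸ (Ideal.span {t} ^ (n + 1) • (⊤ : Submodule B N))) :=
    fun n => (Submodule.quotEquivOfEq _ _ (hI n)).toLinearMap.comp (f n)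
  have hg : ∀ {m : ℕ}, (Submodule.factorPow (Ideal.span {t}) N
      (ha.monotone m.le_succ)).comp (g (m + 1)) = g m := by
    intro m
    ext x
    obtain ⟨y, hy⟩ := Submodule.Quotient.mk_surjective _ (f (m + 1) x)
    have h := LinearMap.congr_fun (hf m) x
    simp only [LinearMap.comp_apply, g, ← h, ← hy]
    rfl
  have hiff : ∀ F : M →ₗ[B] N, (∀ n,
      (Submodule.mkQ (Ideal.span {t ^ (n + 1)} • (⊤ : Submodule B N))).comp F = f n) ↔
      ∀ n, (Submodule.mkQ (Ideal.span {t} ^ (n + 1) • (⊤ : Submodule B N))).comp F = g n := by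
    refine fun F => forall_congr' fun n => ?_
    rw [LinearMap.ext_iff, LinearMap.ext_iff]
    refine forall_congr' fun x => ?_
    rw [← (Submodule.quotEquivOfEq _ _ (hI n)).injective.eq_iff]
    rfl
  refine ⟨IsAdicComplete.StrictMono.lift _ ha g hg, (hiff _).2 fun n =>
    IsAdicComplete.StrictMono.mkQ_comp_lift _ ha g hg, fun F hF =>
    IsAdicComplete.StrictMono.eq_lift _ ha g hg ((hiff F).1 hF)⟩

/-- The lifting property of a projective `B/I`-module, for `B`-linear maps between `B`-modules
killed by `I`, along a map that need only cover the range of the map to be lifted. -/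
lemma exists_lift_of_torsion {B M X W : Type*} [CommRing B] (I : Ideal B)
    [AddCommGroup M] [Module B M] [AddCommGroup X] [Module B X] [AddCommGroup W] [Module B W]
    (hM : Module.IsTorsionBySet B M I)
    (hP : letI := hM.module; Module.Projective (B ⧸ I) M)
    (hX : Module.IsTorsionBySet B X I) (hW : Module.IsTorsionBySet B W I)
    (g : X →ₗ[B] W) (h : M →ₗ[B] W) (hgh : ∀ m, ∃ x, g x = h m) :
    ∃ l : M →ₗ[B] X, ∀ m, g (l m) = h m := by
  have hR : Module.IsTorsionBySet B (LinearMap.range g) I := fun x a =>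
    Subtype.ext (@hW x.1 a)
  let := hM.module
  let := hX.module
  let := hR.module
  have : IsScalarTower B (B ⧸ I) M := hM.isScalarTower
  have : IsScalarTower B (B ⧸ I) X := hX.isScalarTower
  have : IsScalarTower B (B ⧸ I) (LinearMap.range g) := hR.isScalarTower
  have hs : Function.Surjective (algebraMap B (B ⧸ I)) := Ideal.Quotient.mk_surjective
  have : Module.Projective (B ⧸ I) M := hP
  obtain ⟨l, hl⟩ := Module.projective_lifting_property
    (g.rangeRestrict.extendScalarsOfSurjective hs)
    ((h.codRestrict (LinearMap.range g) hgh).extendScalarsOfSurjective hs)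
    (fun y => by
      obtain ⟨x, hx⟩ := g.surjective_rangeRestrict y
      exact ⟨x, hx⟩)
  refine ⟨l.restrictScalars B, fun m => ?_⟩
  exact congrArg Subtype.val (LinearMap.congr_fun hl m)

/-- A section modulo `tⁿ⁺¹` lifts to a compatible section modulo `tⁿ⁺²`. Here `q₁` and
`q₀` are compatible maps from `P/tⁿ⁺²P` onto `M₁` and from `P/tⁿ⁺¹P` onto `M₀`, the kernel of
`π : M₁ → M₀` is `tⁿ⁺¹M₁`, and `s` is a section of `q₀`. -/
lemma exists_section_step {B P M₀ M₁ : Type*} [CommRing B] (t : B) (n : ℕ)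
    [AddCommGroup P] [Module B P] [AddCommGroup M₀] [Module B M₀] [AddCommGroup M₁] [Module B M₁]
    (hM : Module.IsTorsionBySet B M₁ (Ideal.span {t ^ (n + 2)} : Ideal B))
    (hP : letI := hM.module; Module.Projective (B ⧸ Ideal.span {t ^ (n + 2)}) M₁)
    (π : M₁ →ₗ[B] M₀)
    (hker : LinearMap.ker π = Ideal.span {t ^ (n + 1)} • (⊤ : Submodule B M₁))
    (q₀ : (P ⧸ (Ideal.span {t ^ (n + 1)} • (⊤ : Submodule B P))) →ₗ[B] M₀)
    (q₁ : (P ⧸ (Ideal.span {t ^ (n + 2)} • (⊤ : Submodule B P))) →ₗ[B] M₁)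
    (hq : ∀ x, π (q₁ x) = q₀ (resQ B t P n x)) (hq₁ : Function.Surjective q₁)
    (s : M₀ →ₗ[B] (P ⧸ (Ideal.span {t ^ (n + 1)} • (⊤ : Submodule B P))))
    (hs : ∀ m, q₀ (s m) = m) :
    ∃ s' : M₁ →ₗ[B] (P ⧸ (Ideal.span {t ^ (n + 2)} • (⊤ : Submodule B P))),
      (∀ m, q₁ (s' m) = m) ∧ ∀ m, resQ B t P n (s' m) = s (π m) := by
  have hle : (Ideal.span {t ^ (n + 2)} : Ideal B) ≤ Ideal.span {t ^ (n + 1)} :=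
    Ideal.span_singleton_le_span_singleton.mpr (pow_dvd_pow t (by omega))
  have hT₀ : Module.IsTorsionBySet B (P ⧸ (Ideal.span {t ^ (n + 1)} • (⊤ : Submodule B P)))
      (Ideal.span {t ^ (n + 1)} : Ideal B) := Module.isTorsionBySet_quotient_ideal_smul P _
  obtain ⟨l, hl⟩ := exists_lift_of_torsion _ hM hP
    (Module.isTorsionBySet_quotient_ideal_smul P _)
    (fun x a => Prod.ext (@hM x.1 a) (@hT₀ x.2 ⟨a.1, hle a.2⟩))
    (q₁.prod (resQ B t P n)) (LinearMap.id.prod (s.comp π)) (by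
      intro m
      obtain ⟨v, hv⟩ : ∃ v, resQ B t P n v = s (π m) := by
        obtain ⟨v, hv⟩ := Submodule.Quotient.mk_surjective _ (s (π m))
        exact ⟨Submodule.Quotient.mk v, hv⟩
      have hmem : q₁ v - m ∈ LinearMap.ker π := by
        rw [LinearMap.mem_ker, map_sub, hq, hv, hs, sub_self]
      rw [hker, mem_span_singleton_smul_top] at hmem
      obtain ⟨y, hy⟩ := hmem
      obtain ⟨w, rfl⟩ := hq₁ y
      -- `v` maps correctly to `P/tⁿ⁺¹P` but only modulo `tⁿ⁺¹M₁` to `M₁`; `tⁿ⁺¹w` corrects it.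
      refine ⟨v - t ^ (n + 1) • w, Prod.ext ?_ ?_⟩
      · simp [hy]
      · have : t ^ (n + 1) • resQ B t P n w = 0 :=
          @hT₀ (resQ B t P n w) ⟨_, Ideal.mem_span_singleton_self _⟩
        simp [hv, this])
  exact ⟨l, fun m => congrArg Prod.fst (hl m), fun m => congrArg Prod.snd (hl m)⟩

/-- Let `B` be a commutative ring, `t` a non-zero divisor contained in
the Jacobson radical of `B`, and assume `B` is `t`-adically complete. Then the functor
`M ↦ (M/tⁿM)ₙ` from finite projective `B`-modules to the inverse limit of the categories
of finite projective `B/tⁿ`-modules is an equivalence of categories; concretely: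

(full faithfulness) for finite projective `B`-modules `M, N` and any compatible system of
maps `fₙ : M/tⁿM → N/tⁿN`, there is a unique `F : M → N` inducing it; and

(essential surjectivity) any system `(Mₙ)` of finite projective `B/tⁿ`-modules with
surjective transition maps `Mₙ₊₁ → Mₙ` having kernel `tⁿMₙ₊₁` arises, compatibly, as
`(N/tⁿN)ₙ` for a finite projective `B`-module `N` (realized as a direct summand type:
a finitely generated projective submodule of some `Bᵏ`). -/
theorem stmt15 (B : Type*) [CommRing B] (t : B) (ht : t ∈ nonZeroDivisors B)
    (hjac : t ∈ (⊥ : Ideal B).jacobson)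
    (hc : IsAdicComplete (Ideal.span {t}) B) :
    (∀ (M N : Type*) [AddCommGroup M] [Module B M] [AddCommGroup N] [Module B N],
      Module.Finite B M → Module.Projective B M →
      Module.Finite B N → Module.Projective B N →
      ∀ f : (n : ℕ) → (M ⧸ (Ideal.span {t ^ (n + 1)} • (⊤ : Submodule B M))) →ₗ[B]
          (N ⧸ (Ideal.span {t ^ (n + 1)} • (⊤ : Submodule B N))),
        (∀ n, (resQ B t N n).comp (f (n + 1)) = (f n).comp (resQ B t M n)) →
        ∃! F : M →ₗ[B] N, ∀ n,
          (Submodule.mkQ (Ideal.span {t ^ (n + 1)} • (⊤ : Submodule B N))).comp F =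
            (f n).comp
              (Submodule.mkQ (Ideal.span {t ^ (n + 1)} • (⊤ : Submodule B M)))) ∧
    (∀ (M : ℕ → Type*) [∀ n, AddCommGroup (M n)] [∀ n, Module B (M n)]
      (htors : ∀ n, Module.IsTorsionBySet B (M n) (Ideal.span {t ^ (n + 1)} : Ideal B)),
      (∀ n, Module.Finite B (M n)) →
      (∀ n, letI := (htors n).module;
        Module.Projective (B ⧸ Ideal.span {t ^ (n + 1)}) (M n)) →
      ∀ π : (n : ℕ) → M (n + 1) →ₗ[B] M n,
        (∀ n, Function.Surjective (π n)) →
        (∀ n, LinearMap.ker (π n) =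
          Ideal.span {t ^ (n + 1)} • (⊤ : Submodule B (M (n + 1)))) →
        ∃ (k : ℕ) (N : Submodule B (Fin k → B)), N.FG ∧ Module.Projective B ↥N ∧
          ∃ e : (n : ℕ) →
            ((↥N) ⧸ (Ideal.span {t ^ (n + 1)} • (⊤ : Submodule B ↥N))) ≃ₗ[B] M n,
            ∀ n, (π n).comp (e (n + 1)).toLinearMap =
              (e n).toLinearMap.comp (resQ B t (↥N) n)) := by
  refine ⟨?_, ?_⟩
  · intro M N _ _ _ _ _ _ _ _ f hf
    have : IsAdicComplete (Ideal.span {t}) N := isAdicComplete_of_finite_projective _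
    refine existsUnique_lift t (fun n => (f n).comp (Submodule.mkQ _)) fun n => ?_
    refine LinearMap.ext fun x => ?_
    have h := LinearMap.congr_fun (hf n) (Submodule.Quotient.mk x)
    simp only [LinearMap.comp_apply] at h
    simp only [LinearMap.comp_apply, Submodule.mkQ_apply, h]
    exact congrArg (f n) (show resQ B t M n (Submodule.Quotient.mk x) = _ from rfl)
  · intro M _ _ htors hfin hproj π hπ hker
    obtain ⟨k, p₀, hp₀⟩ := Module.Finite.exists_fin' B (M 0)
    obtain ⟨p, hp0, hp⟩ := exists_dependent_seq (X := fun n => (Fin k → B) →ₗ[B] M n)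
      (fun n a b => (π n).comp b = a) p₀
      (fun n a => Module.projective_lifting_property (π n) a (hπ n))
    have hp' : ∀ n x, π n (p (n + 1) x) = p n x := fun n x => LinearMap.congr_fun (hp n) x
    have hsurj : ∀ n, Function.Surjective (p n) := by
      intro n
      induction n with
      | zero => rw [hp0]; exact hp₀
      | succ n ih =>
        rw [← LinearMap.range_eq_top, ← top_le_iff]
        refine Submodule.le_of_le_smul_of_le_jacobson_bot (I := Ideal.span {t ^ (n + 1)})
          (hfin (n + 1)).fg_top ?_ ?_
        · rw [Ideal.span_singleton_le_iff_mem]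
          exact Ideal.pow_mem_of_mem _ hjac _ n.succ_pos
        · intro m _
          obtain ⟨x, hx⟩ := ih (π n m)
          rw [← hker]
          refine Submodule.mem_sup.2 ⟨p (n + 1) x, ⟨x, rfl⟩, m - p (n + 1) x, ?_, by abel⟩
          rw [LinearMap.mem_ker, map_sub, hp', hx, sub_self]
    have hkill : ∀ n, (Ideal.span {t ^ (n + 1)} • ⊤ : Submodule B (Fin k → B)) ≤
        LinearMap.ker (p n) := by
      intro n x hx
      obtain ⟨y, rfl⟩ := (mem_span_singleton_smul_top _ _).1 hx
      rw [LinearMap.mem_ker, map_smul]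
      exact @htors n (p n y) ⟨_, Ideal.mem_span_singleton_self _⟩
    let q := fun n => Submodule.liftQ _ (p n) (hkill n)
    have hqm : ∀ n x, q n (Submodule.Quotient.mk x) = p n x := fun n x => rfl
    have hqs : ∀ n, Function.Surjective (q n) := fun n m => by
      obtain ⟨x, hx⟩ := hsurj n m
      exact ⟨Submodule.Quotient.mk x, hx⟩
    have hq : ∀ n x, π n (q (n + 1) x) = q n (resQ B t _ n x) := by
      intro n x
      obtain ⟨x, rfl⟩ := Submodule.Quotient.mk_surjective _ x
      exact hp' n x
    obtain ⟨s₀, hs₀⟩ := exists_lift_of_torsion _ (htors 0) (hproj 0)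
      (Module.isTorsionBySet_quotient_ideal_smul _ _) (htors 0) (q 0) LinearMap.id
      (fun m => hqs 0 m)
    obtain ⟨s, -, hs⟩ := exists_dependent_seq
      (X := fun n => {s : M n →ₗ[B]
        ((Fin k → B) ⧸ (Ideal.span {t ^ (n + 1)} • (⊤ : Submodule B (Fin k → B)))) //
          ∀ m, q n (s m) = m})
      (fun n a b => ∀ m, resQ B t _ n (b.1 m) = a.1 (π n m)) ⟨s₀, hs₀⟩
      (fun n a => by
        obtain ⟨s', h₁, h₂⟩ := exists_section_step t n (htors (n + 1)) (hproj (n + 1)) (π n)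
          (hker n) (q n) (q (n + 1)) (hq n) (hqs (n + 1)) a.1 a.2
        exact ⟨⟨s', h₁⟩, h₂⟩)
    have : IsAdicComplete (Ideal.span {t}) (Fin k → B) := isAdicComplete_of_finite_projective _
    obtain ⟨F, hF, hFu⟩ := existsUnique_lift t (fun n => (s n).1.comp (p n)) (by
      intro n
      refine LinearMap.ext fun x => ?_
      simp only [LinearMap.comp_apply, hs, hp'])
    have hFx : ∀ n x, (Submodule.Quotient.mk (F x) : (Fin k → B) ⧸
        (Ideal.span {t ^ (n + 1)} • (⊤ : Submodule B (Fin k → B)))) = (s n).1 (p n x) :=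
      fun n x => LinearMap.congr_fun (hF n) x
    have hpF : ∀ n x, p n (F x) = p n x := fun n x => by
      rw [← hqm, hFx, (s n).2]
    have hFF : F.comp F = F := hFu _ fun n => by
      refine LinearMap.ext fun x => ?_
      change Submodule.Quotient.mk (F (F x)) = (s n).1 (p n x)
      rw [hFx, hpF]
    have hfix : ∀ x : LinearMap.range F, F x = x := by
      rintro ⟨_, y, rfl⟩
      exact LinearMap.congr_fun hFF y
    have hkerN : ∀ n, Ideal.span {t ^ (n + 1)} • (⊤ : Submodule B (LinearMap.range F)) =
        LinearMap.ker ((p n).comp (LinearMap.range F).subtype) := by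
      intro n
      ext x
      constructor
      · intro hx
        exact hkill n (map_mem_smul_top _ (LinearMap.range F).subtype hx)
      · intro hx
        have h0 : p n x = 0 := hx
        have h1 := hFx n x
        rw [h0, map_zero, hfix, Submodule.Quotient.mk_eq_zero] at h1
        have h2 := map_mem_smul_top _ F.rangeRestrict h1
        rwa [show F.rangeRestrict x = x from Subtype.ext (hfix x)] at h2
    refine ⟨k, LinearMap.range F, ?_, ?_, fun n => (Submodule.quotEquivOfEq _ _ (hkerN n)).trans
      (LinearMap.quotKerEquivOfSurjective _ ?_), ?_⟩
    · rw [LinearMap.range_eq_map]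
      exact Module.Finite.fg_top.map F
    · exact Module.Projective.of_split (LinearMap.range F).subtype F.rangeRestrict
        (LinearMap.ext fun x => Subtype.ext (hfix x))
    · intro m
      obtain ⟨x, hx⟩ := hsurj n m
      exact ⟨⟨F x, x, rfl⟩, (hpF n x).trans hx⟩
    · intro n
      ext x
      exact hp' n x
end
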